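/- Let Ω be an open subset of ℝⁿ and let ℱ be a finite or countable family of H-continuous pairs on Ω. Then the set D_ℱ = { x ∈ Ω : u(x) = v(x) for every (u, v) ∈ ℱ } is dense in Ω, and for every (u, v) ∈ ℱ the function u is continuous on D_ℱ. -/

import Mathlib

open Set

/-- Points of `ℝⁿ`. -/
abbrev Pt (n : ℕ) := EuclideanSpace ℝ (Fin n)

/-- Lower Baire operator `I(D,Ω,f)(x) = sup_{δ>0} inf { f y : y ∈ B_δ(x) ∩ D }`,
where `B_δ(x) = { y ∈ Ω : ‖y - x‖ < δ }`. -/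
noncomputable def Ilow {n : ℕ} (D Om : Set (Pt n)) (f : Pt n → ℝ) (x : Pt n) : ℝ :=
  sSup {a : ℝ | ∃ δ : ℝ, 0 < δ ∧
    a = sInf (f '' {y | y ∈ Om ∧ ‖y - x‖ < δ ∧ y ∈ D})}

/-- Upper Baire operator `S(D,Ω,f)(x) = inf_{δ>0} sup { f y : y ∈ B_δ(x) ∩ D }`. -/
noncomputable def Shigh {n : ℕ} (D Om : Set (Pt n)) (f : Pt n → ℝ) (x : Pt n) : ℝ :=
  sInf {a : ℝ | ∃ δ : ℝ, 0 < δ ∧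
    a = sSup (f '' {y | y ∈ Om ∧ ‖y - x‖ < δ ∧ y ∈ D})}

/-- `f`, defined on `D ⊆ Ω`, is locally bounded relative to `Ω`. -/
def LocBddOn {n : ℕ} (Om D : Set (Pt n)) (f : Pt n → ℝ) : Prop :=
  ∀ x ∈ Om, ∃ δ : ℝ, 0 < δ ∧ ∃ M : ℝ,
    ∀ y, y ∈ Om → ‖y - x‖ < δ → y ∈ D → |f y| < M

/-- `(u, v)` encodes an interval-valued function `x ↦ [u x, v x]` on `Om`. -/
def IntervalPair {n : ℕ} (Om : Set (Pt n)) (u v : Pt n → ℝ) : Prop :=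
  LocBddOn Om Om u ∧ LocBddOn Om Om v ∧ ∀ x ∈ Om, u x ≤ v x

/-- The pair `(u, v)` is S-continuous on `Om`: `I(u) = u` and `S(v) = v`. -/
def SCont {n : ℕ} (Om : Set (Pt n)) (u v : Pt n → ℝ) : Prop :=
  ∀ x ∈ Om, Ilow Om Om u x = u x ∧ Shigh Om Om v x = v x

/-- The pair `(u, v)` is Hausdorff continuous on `Om`. -/
def HCont {n : ℕ} (Om : Set (Pt n)) (u v : Pt n → ℝ) : Prop :=
  ∀ p q : Pt n → ℝ, LocBddOn Om Om p → LocBddOn Om Om q →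
    (∀ x ∈ Om, u x ≤ p x ∧ p x ≤ q x ∧ q x ≤ v x) →
    ∀ x ∈ Om, Ilow Om Om p x = u x ∧ Shigh Om Om q x = v x

/-- `(u, v)` is an H-continuous interval pair on `Om`. -/
def HContPair {n : ℕ} (Om : Set (Pt n)) (u v : Pt n → ℝ) : Prop :=
  IntervalPair Om u v ∧ HCont Om u v

/-- Lower endpoint of the pointwise interval product. -/
noncomputable def imin {n : ℕ} (u₁ v₁ u₂ v₂ : Pt n → ℝ) (x : Pt n) : ℝ :=
  min (min (u₁ x * u₂ x) (u₁ x * v₂ x)) (min (v₁ x * u₂ x) (v₁ x * v₂ x))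

/-- Upper endpoint of the pointwise interval product. -/
noncomputable def imax {n : ℕ} (u₁ v₁ u₂ v₂ : Pt n → ℝ) (x : Pt n) : ℝ :=
  max (max (u₁ x * u₂ x) (u₁ x * v₂ x)) (max (v₁ x * u₂ x) (v₁ x * v₂ x))

/-- `(pl, pu)` is the H-continuous pair contained pointwise in the interval sum of
`(u₁, v₁)` and `(u₂, v₂)`, i.e. `(pl, pu) = (u₁,v₁) ⊕ (u₂,v₂)`. -/
def IsOplus {n : ℕ} (Om : Set (Pt n)) (u₁ v₁ u₂ v₂ pl pu : Pt n → ℝ) : Prop :=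
  HContPair Om pl pu ∧
    ∀ x ∈ Om, u₁ x + u₂ x ≤ pl x ∧ pl x ≤ pu x ∧ pu x ≤ v₁ x + v₂ x

/-- `(ql, qu)` is the H-continuous pair contained pointwise in the interval product of
`(u₁, v₁)` and `(u₂, v₂)`, i.e. `(ql, qu) = (u₁,v₁) ⊗ (u₂,v₂)`. -/
def IsOtimes {n : ℕ} (Om : Set (Pt n)) (u₁ v₁ u₂ v₂ ql qu : Pt n → ℝ) : Prop :=
  HContPair Om ql qu ∧
    ∀ x ∈ Om, imin u₁ v₁ u₂ v₂ x ≤ ql x ∧ ql x ≤ qu x ∧ qu x ≤ imax u₁ v₁ u₂ v₂ x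

/-!
For an H-continuous pair `(u, v)`, `u` is lower semicontinuous, `v` is upper semicontinuous and
`I(v) = u`, so that every value `u x` is approached by values of `v` near `x`. Hence each
`{v < u + 1 / (k + 1)}` is open and dense in `Ω`, and by Baire's theorem `u = v` on a dense set,
simultaneously for countably many pairs. On that set `u` coincides with `v`, so it is both lower
and upper semicontinuous there.
-/

open Filter Metric Topology

section Residual

variable {X : Type*} [TopologicalSpace X] {u v : X → ℝ}

theorem isOpen_lt_add (hu : LowerSemicontinuous u) (hv : UpperSemicontinuous v) (ε : ℝ) :
    IsOpen {x | v x < u x + ε} := by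
  have hdiff : UpperSemicontinuous fun x ↦ v x + -u x := hv.add hu.neg
  simpa only [preimage, mem_Iio, ← sub_eq_add_neg, sub_lt_iff_lt_add'] using
    hdiff.isOpen_preimage ε

theorem dense_lt_add (hu : LowerSemicontinuous u)
    (hfreq : ∀ x a, u x < a → ∃ᶠ y in 𝓝 x, v y < a) {ε : ℝ} (hε : 0 < ε) :
    Dense {x | v x < u x + ε} := by
  intro x
  have hv_lt : ∃ᶠ y in 𝓝 x, v y < u x + ε / 2 := hfreq x _ (by linarith)
  have lt_hu : ∀ᶠ y in 𝓝 x, u x - ε / 2 < u y := hu x _ (by linarith)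
  refine mem_closure_iff_frequently.2 ((hv_lt.and_eventually lt_hu).mono ?_)
  rintro y ⟨hvy, huy⟩
  simp only [mem_ofPred_eq]
  linarith

theorem eventually_residual_eq_of_semicontinuous (hu : LowerSemicontinuous u)
    (hv : UpperSemicontinuous v) (huv : ∀ x, u x ≤ v x)
    (hfreq : ∀ x a, u x < a → ∃ᶠ y in 𝓝 x, v y < a) :
    ∀ᶠ x in residual X, u x = v x := by
  have hlt : ∀ᶠ x in residual X, ∀ k : ℕ, v x < u x + 1 / (k + 1) :=
    eventually_countable_forall.2 fun k ↦
      residual_of_dense_open (isOpen_lt_add hu hv _)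
        (dense_lt_add hu hfreq Nat.one_div_pos_of_nat)
  filter_upwards [hlt] with x hx
  refine (huv x).antisymm (le_of_forall_pos_lt_add fun ε hε ↦ ?_)
  obtain ⟨k, hk⟩ := exists_nat_one_div_lt hε
  linarith [hx k]

end Residual

section BaireOperators

variable {n : ℕ} {D Om : Set (Pt n)} {f : Pt n → ℝ} {x : Pt n} {a δ : ℝ}

theorem ilow_eq_iSup (D Om : Set (Pt n)) (f : Pt n → ℝ) (x : Pt n) :
    Ilow D Om f x = ⨆ δ : Ioi (0 : ℝ), sInf (f '' (ball x δ ∩ (Om ∩ D))) := by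
  have hball (δ : ℝ) : {y | y ∈ Om ∧ ‖y - x‖ < δ ∧ y ∈ D} = ball x δ ∩ (Om ∩ D) := by
    ext y
    simp only [mem_ofPred_eq, mem_inter_iff, mem_ball_iff_norm]
    tauto
  simp only [Ilow, hball, iSup]
  congr 1
  ext b
  simp only [mem_ofPred_eq, mem_range, Subtype.exists, mem_Ioi, exists_prop, eq_comm]

theorem ilow_neg (D Om : Set (Pt n)) (f : Pt n → ℝ) (x : Pt n) :
    Ilow D Om (-f) x = -Shigh D Om f x := by
  have hneg (s : Set (Pt n)) : sInf ((-f) '' s) = -sSup (f '' s) := by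
    rw [← Real.sInf_neg, ← image_neg_eq_neg, image_image]
    rfl
  simp only [Ilow, Shigh, hneg]
  rw [← Real.sSup_neg]
  congr 1
  ext b
  simp only [mem_ofPred_eq, Set.mem_neg, neg_eq_iff_eq_neg]

theorem sInf_image_ball_le_ilow (hx : x ∈ Om ∩ D) (hδ : 0 < δ) :
    sInf (f '' (ball x δ ∩ (Om ∩ D))) ≤ Ilow D Om f x := by
  rw [ilow_eq_iSup]
  refine le_ciSup (f := fun ε : Ioi (0 : ℝ) ↦ sInf (f '' (ball x ε ∩ (Om ∩ D))))
    ⟨max (f x) 0, ?_⟩ ⟨δ, hδ⟩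
  rintro _ ⟨ε, rfl⟩
  by_cases hbdd : BddBelow (f '' (ball x ε ∩ (Om ∩ D)))
  · exact le_max_of_le_left (csInf_le hbdd (mem_image_of_mem f ⟨mem_ball_self ε.2, hx⟩))
  · exact le_max_of_le_right (Real.sInf_of_not_bddBelow hbdd).le

/- Local boundedness does not suffice here: the real `sInf` of a set unbounded below is `0`, so a
ball on which `f` is unbounded below forces `0 ≤ I(f)` at its points, also where `f < 0`. -/
theorem bddBelow_image_ball_of_ilow_le (hf : ∀ y ∈ Om ∩ D, Ilow D Om f y ≤ f y) (x : Pt n)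
    (δ : ℝ) : BddBelow (f '' (ball x δ ∩ (Om ∩ D))) := by
  by_contra hunbdd
  obtain ⟨_, ⟨y, ⟨hyx, hy⟩, rfl⟩, hfy⟩ := not_bddBelow_iff.1 hunbdd 0
  have hδ : 0 < δ := pos_of_mem_ball hyx
  have hsub : ball x δ ⊆ ball y (2 * δ) :=
    ball_subset_ball' (by linarith [mem_ball'.1 hyx])
  have hunbdd_y : ¬ BddBelow (f '' (ball y (2 * δ) ∩ (Om ∩ D))) := fun h ↦
    hunbdd (h.mono (image_mono (inter_subset_inter_left _ hsub)))
  have hnonneg : 0 ≤ Ilow D Om f y :=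
    (Real.sInf_of_not_bddBelow hunbdd_y).ge.trans
      (sInf_image_ball_le_ilow hy (by positivity))
  exact (hnonneg.trans (hf y hy)).not_gt hfy

theorem lowerSemicontinuousOn_of_ilow_eq (hf : ∀ y ∈ Om ∩ D, Ilow D Om f y = f y) :
    LowerSemicontinuousOn f (Om ∩ D) := by
  intro x hx a ha
  rw [← hf x hx, ilow_eq_iSup] at ha
  obtain ⟨⟨δ, hδ⟩, hlt⟩ := exists_lt_of_lt_ciSup ha
  filter_upwards [inter_mem_nhdsWithin (Om ∩ D) (ball_mem_nhds x hδ)] with y ⟨hy, hyx⟩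
  exact hlt.trans_le
    (csInf_le (bddBelow_image_ball_of_ilow_le (fun z hz ↦ (hf z hz).le) x δ)
      (mem_image_of_mem f ⟨hyx, hy⟩))

theorem upperSemicontinuousOn_of_shigh_eq (hf : ∀ y ∈ Om ∩ D, Shigh D Om f y = f y) :
    UpperSemicontinuousOn f (Om ∩ D) := by
  refine lowerSemicontinuousOn_neg_iff.1 (lowerSemicontinuousOn_of_ilow_eq fun y hy ↦ ?_)
  rw [ilow_neg, hf y hy, Pi.neg_apply]

theorem frequently_lt_of_ilow_lt (hx : x ∈ Om ∩ D) (ha : Ilow D Om f x < a) :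
    ∃ᶠ y in 𝓝[Om ∩ D] x, f y < a := by
  refine (nhdsWithin_basis_ball.frequently_iff).2 fun δ hδ ↦ ?_
  have hne : (ball x δ ∩ (Om ∩ D)).Nonempty := ⟨x, mem_ball_self hδ, hx⟩
  obtain ⟨_, ⟨y, hy, rfl⟩, hya⟩ :=
    exists_lt_of_csInf_lt (hne.image f) ((sInf_image_ball_le_ilow hx hδ).trans_lt ha)
  exact ⟨y, hy, hya⟩

end BaireOperators

section Pairs

variable {n : ℕ} {Om : Set (Pt n)} {u v : Pt n → ℝ}

theorem SCont.lowerSemicontinuousOn (h : SCont Om u v) : LowerSemicontinuousOn u Om := by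
  simpa only [inter_self] using
    lowerSemicontinuousOn_of_ilow_eq (D := Om) fun x hx ↦ (h x hx.1).1

theorem SCont.upperSemicontinuousOn (h : SCont Om u v) : UpperSemicontinuousOn v Om := by
  simpa only [inter_self] using
    upperSemicontinuousOn_of_shigh_eq (D := Om) fun x hx ↦ (h x hx.1).2

theorem HContPair.le (h : HContPair Om u v) : ∀ x ∈ Om, u x ≤ v x := h.1.2.2

theorem HContPair.sCont (h : HContPair Om u v) : SCont Om u v :=
  h.2 u v h.1.1 h.1.2.1 fun x hx ↦ ⟨le_rfl, h.le x hx, le_rfl⟩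

theorem HContPair.ilow_upper (h : HContPair Om u v) : ∀ x ∈ Om, Ilow Om Om v x = u x :=
  fun x hx ↦ (h.2 v v h.1.2.1 h.1.2.1 (fun y hy ↦ ⟨h.le y hy, le_rfl, le_rfl⟩) x hx).1

theorem HContPair.frequently_lt (h : HContPair Om u v) {x : Pt n} (hx : x ∈ Om) {a : ℝ}
    (ha : u x < a) : ∃ᶠ y in 𝓝[Om] x, v y < a := by
  rw [← h.ilow_upper x hx] at ha
  simpa only [inter_self] using frequently_lt_of_ilow_lt (D := Om) ⟨hx, hx⟩ ha

theorem HContPair.eventually_residual_eq (h : HContPair Om u v) :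
    ∀ᶠ x : Om in residual Om, u x = v x := by
  refine eventually_residual_eq_of_semicontinuous (u := Om.domRestrict u) (v := Om.domRestrict v)
    (lowerSemicontinuous_restrict_iff.2 h.sCont.lowerSemicontinuousOn)
    (upperSemicontinuousOn_iff_restrict.2 h.sCont.upperSemicontinuousOn)
    (fun x ↦ h.le x x.2) fun x a ha ↦ ?_
  have hfreq := h.frequently_lt x.2 ha
  rwa [← map_nhds_subtype_val, frequently_map] at hfreq

theorem HContPair.continuousOn {s : Set (Pt n)} (h : HContPair Om u v) (hs : s ⊆ Om)
    (heq : EqOn u v s) : ContinuousOn u s := by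
  refine continuousOn_iff_lower_upperSemicontinuousOn.2
    ⟨h.sCont.lowerSemicontinuousOn.mono hs, fun x hx ↦ ?_⟩
  exact UpperSemicontinuousWithinAt.congr_of_eventuallyEq
    (h.sCont.upperSemicontinuousOn.mono hs x hx) hx
    (heq.symm.eventuallyEq_of_mem self_mem_nhdsWithin)

end Pairs

theorem stmt3_general {n : ℕ} (Om : Set (Pt n)) [BaireSpace Om]
    (F : Set ((Pt n → ℝ) × (Pt n → ℝ))) (hcount : F.Countable)
    (hH : ∀ p ∈ F, HContPair Om p.1 p.2) :
    Om ⊆ closure {x | x ∈ Om ∧ ∀ p ∈ F, p.1 x = p.2 x} ∧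
    ∀ p ∈ F, ContinuousOn p.1 {x | x ∈ Om ∧ ∀ q ∈ F, q.1 x = q.2 x} := by
  refine ⟨?_, fun p hp ↦ (hH p hp).continuousOn (fun x hx ↦ hx.1) fun x hx ↦ hx.2 p hp⟩
  have hres : ∀ᶠ x : Om in residual Om, ∀ p ∈ F, p.1 x = p.2 x :=
    (eventually_countable_ball hcount).2 fun p hp ↦ (hH p hp).eventually_residual_eq
  have hdense : Dense {x : Om | ∀ p ∈ F, p.1 x = p.2 x} := dense_of_mem_residual hres
  refine (Subtype.dense_iff.1 hdense).trans (closure_mono ?_)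
  rintro _ ⟨x, hx, rfl⟩
  exact ⟨x.2, hx⟩

theorem stmt3 {n : ℕ} (Om : Set (Pt n)) (hOm : IsOpen Om)
    (F : Set ((Pt n → ℝ) × (Pt n → ℝ))) (hcount : F.Countable)
    (hH : ∀ p ∈ F, HContPair Om p.1 p.2) :
    Om ⊆ closure {x | x ∈ Om ∧ ∀ p ∈ F, p.1 x = p.2 x} ∧
    ∀ p ∈ F, ContinuousOn p.1 {x | x ∈ Om ∧ ∀ q ∈ F, q.1 x = q.2 x} := by
  have := hOm.baireSpace
  exact stmt3_general Om F hcount hH
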